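/- arXiv:2304.11692 — 4 statements merged into one kernel-verified Lean document; each statement's English description precedes it below -/
import Mathlib

section
/- Let Y be a real Gaussian random variable with mean μ and standard deviation σ > 0, and let X = max(Y, 0). Then for every real t, the moment generating function of X satisfies E[e^{tX}] = φ(−μ/σ) + exp(μt + σ²t²/2)·(1 − φ(−(μ + σ²t)/σ)). -/
/-!
The expectation is an integral against the Gaussian density of `Y`, which is split at `0`. On
`(-∞, 0]` the integrand is the density itself, so this half is `P(Y ≤ 0)`, and standardizing gives
the first term. On `(0, ∞)` completing the square (`exp_mul_gaussianPDFReal`) turns `e^{ty}` times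
the density of `N(μ, σ²)` into `exp(μt + σ²t²/2)` times the density of `N(μ + σ²t, σ²)`, so this
half is that constant times the mass which the shifted Gaussian gives to `(0, ∞)`.
-/

open MeasureTheory ProbabilityTheory

/-- The cumulative distribution function of the standard normal distribution. -/
noncomputable def stdNormalCDF (x : ℝ) : ℝ :=
  ∫ t in Set.Iic x, (Real.sqrt (2 * Real.pi))⁻¹ * Real.exp (-t ^ 2 / 2)

/-- Standardization: a Gaussian of mean `m` and standard deviation `σ` gives `(-∞, 0]` the mass
`φ(-m/σ)`. -/
lemma setIntegral_Iic_gaussianPDFReal (m σ : ℝ) (hσ : 0 < σ) (v : NNReal) (hvσ : (v : ℝ) = σ ^ 2) :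
    ∫ y in Set.Iic 0, gaussianPDFReal m v y = stdNormalCDF (-(m / σ)) := by
  have hv : v ≠ 0 := by
    rintro rfl
    exact (pow_pos hσ 2).ne hvσ
  have hmap : (gaussianReal 0 1).map (fun x => σ * x + m)
      = gaussianReal m v := by
    have h1 := gaussianReal_map_const_mul (μ := 0) (v := 1) σ
    have hvmk : NNReal.mk (σ ^ 2) (sq_nonneg σ) = v := NNReal.eq hvσ.symm
    rw [hvmk] at h1
    have h2 := gaussianReal_map_add_const (μ := σ * 0) (v := v * 1) m
    rw [← h1, Measure.map_map (by fun_prop) (by fun_prop)] at h2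
    simpa [Function.comp_def] using h2
  have hpre : (fun x => σ * x + m) ⁻¹' Set.Iic 0 = Set.Iic (-(m / σ)) := by
    ext x
    simp only [Set.mem_preimage, Set.mem_Iic]
    rw [← neg_div, le_div_iff₀ hσ]
    constructor <;> intro h <;> linarith
  have hnn : ∀ (a : ℝ) (v : NNReal) (s : Set ℝ), 0 ≤ ∫ y in s, gaussianPDFReal a v y :=
    fun a v s => integral_nonneg fun y => gaussianPDFReal_nonneg a v y
  have hmeas : gaussianReal m v (Set.Iic 0)
      = gaussianReal 0 1 (Set.Iic (-(m / σ))) := by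
    rw [← hmap, Measure.map_apply (by fun_prop) measurableSet_Iic, hpre]
  rw [gaussianReal_apply_eq_integral _ hv, gaussianReal_apply_eq_integral _ one_ne_zero,
    ENNReal.ofReal_eq_ofReal_iff (hnn _ _ _) (hnn _ _ _)] at hmeas
  rw [hmeas, stdNormalCDF]
  simp [gaussianPDFReal]

/-- Exponential tilting of a Gaussian density shifts its mean, by completing the square. -/
lemma exp_mul_gaussianPDFReal (μ σ : ℝ) (hσ : 0 < σ) (v : NNReal) (hvσ : (v : ℝ) = σ ^ 2)
    (t y : ℝ) :
    gaussianPDFReal μ v y * Real.exp (t * y) =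
      Real.exp (μ * t + σ ^ 2 * t ^ 2 / 2) *
        gaussianPDFReal (μ + σ ^ 2 * t) v y := by
  simp only [gaussianPDFReal, hvσ]
  rw [mul_assoc, mul_left_comm (Real.exp _), ← Real.exp_add, ← Real.exp_add]
  congr 2
  field_simp
  ring

theorem relu_gaussian_mgf {Ω : Type*} [MeasurableSpace Ω] (P : Measure Ω)
    [IsProbabilityMeasure P] (μ σ : ℝ) (hσ : 0 < σ) (Y : Ω → ℝ)
    (hY : P.map Y = gaussianReal μ ⟨σ ^ 2, sq_nonneg σ⟩) (t : ℝ) :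
    mgf (fun ω => max (Y ω) 0) P t =
      stdNormalCDF (-(μ / σ)) +
        Real.exp (μ * t + σ ^ 2 * t ^ 2 / 2) *
          (1 - stdNormalCDF (-((μ + σ ^ 2 * t) / σ))) := by
  obtain ⟨v, hvσ, hY⟩ : ∃ v : NNReal, (v : ℝ) = σ ^ 2 ∧ P.map Y = gaussianReal μ v :=
    ⟨_, rfl, hY⟩
  have hv : v ≠ 0 := by
    rintro rfl
    exact (pow_pos hσ 2).ne hvσ
  -- `Measure.map` of a function that is not a.e. measurable is the zero measure.
  have hYm : AEMeasurable Y P := by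
    apply AEMeasurable.of_map_ne_zero
    rw [hY]
    exact IsProbabilityMeasure.ne_zero _
  have hmgf : mgf (fun ω => max (Y ω) 0) P t =
      ∫ y, gaussianPDFReal μ v y * Real.exp (t * max y 0) := by
    have h := integral_map (f := fun y : ℝ => Real.exp (t * max y 0)) hYm
      (Continuous.aestronglyMeasurable (by fun_prop))
    rw [mgf, ← h, hY, integral_gaussianReal_eq_integral_smul hv]
    simp only [smul_eq_mul]
  have hneg : Set.EqOn (gaussianPDFReal μ v)
      (fun y => gaussianPDFReal μ v y * Real.exp (t * max y 0))
      (Set.Iic 0) := by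
    intro y hy
    simp [max_eq_right (Set.mem_Iic.1 hy)]
  have hpos : Set.EqOn (fun y => Real.exp (μ * t + σ ^ 2 * t ^ 2 / 2) *
        gaussianPDFReal (μ + σ ^ 2 * t) v y)
      (fun y => gaussianPDFReal μ v y * Real.exp (t * max y 0))
      (Set.Ioi 0) := by
    intro y hy
    simp only [max_eq_left (Set.mem_Ioi.1 hy).le]
    exact (exp_mul_gaussianPDFReal μ σ hσ v hvσ t y).symm
  have hint := integrable_gaussianPDFReal (μ + σ ^ 2 * t) v
  have hIic := (integrable_gaussianPDFReal μ v).integrableOn.congr_fun hneg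
    measurableSet_Iic
  have hIoi := (hint.const_mul (Real.exp (μ * t + σ ^ 2 * t ^ 2 / 2))).integrableOn.congr_fun hpos
    measurableSet_Ioi
  have htotal := intervalIntegral.integral_Iic_add_Ioi (b := 0) hint.integrableOn hint.integrableOn
  rw [integral_gaussianPDFReal_eq_one _ hv, setIntegral_Iic_gaussianPDFReal _ _ hσ v hvσ] at htotal
  rw [hmgf, ← intervalIntegral.integral_Iic_add_Ioi hIic hIoi,
    ← setIntegral_congr_fun measurableSet_Iic hneg, ← setIntegral_congr_fun measurableSet_Ioi hpos,
    integral_const_mul, setIntegral_Iic_gaussianPDFReal _ _ hσ v hvσ, ← htotal]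
  ring
end

section
/- C(R) tends to 1 as R tends to +∞. -/
/-!
Write `e = erfc R` and `g = exp (-R²) / √π`. The reflection formula `erfc (-R) = 2 - e`
turns the denominator into `D R = (2 - e) + (R² e) (2 - e) + 2 R g - 2 (2 - e) (R g) - g²`: the
terms quadratic in `R` cancel up to the factor `e`. Since `R · exp (-t²) ≤ t · exp (-t²)` for
`t > R`, integrating gives the Gaussian tail bound `R · ∫_R^∞ exp (-t²) ≤ exp (-R²) / 2`, so
`R² e`, `e`, `R g` and `g` all tend to `0`. Hence both `erfc (-R)` and `D R` tend to `2`.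
-/

open MeasureTheory Filter

/-- The complementary error function. -/
noncomputable def erfc (x : ℝ) : ℝ :=
  2 / Real.sqrt Real.pi * ∫ t in Set.Ioi x, Real.exp (-t ^ 2)

/-- The denominator of the explosion-rate bound. -/
noncomputable def D (R : ℝ) : ℝ :=
  (1 + 2 * R ^ 2) * erfc (-R) + 2 * R * Real.exp (-R ^ 2) / Real.sqrt Real.pi -
    (R * erfc (-R) + Real.exp (-R ^ 2) / Real.sqrt Real.pi) ^ 2

/-- The explosion-rate bound. -/
noncomputable def C (R : ℝ) : ℝ := erfc (-R) / D R

theorem integrable_exp_neg_sq : Integrable (fun t : ℝ => Real.exp (-t ^ 2)) := by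
  simpa using integrable_exp_neg_mul_sq (b := 1) one_pos

theorem tendsto_mul_exp_neg_sq :
    Tendsto (fun R : ℝ => R * Real.exp (-R ^ 2)) atTop (nhds 0) := by
  have h := Real.tendsto_pow_mul_exp_neg_atTop_nhds_zero 1
  refine squeeze_zero' ?_ ?_ h
  · filter_upwards [eventually_ge_atTop 0] with R hR
    positivity
  · filter_upwards [eventually_ge_atTop 1] with R hR
    rw [pow_one]
    gcongr
    nlinarith

theorem tendsto_exp_neg_sq : Tendsto (fun R : ℝ => Real.exp (-R ^ 2)) atTop (nhds 0) := by
  refine squeeze_zero' (Eventually.of_forall fun R => (Real.exp_pos _).le) ?_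
    tendsto_mul_exp_neg_sq
  filter_upwards [eventually_ge_atTop 1] with R hR
  exact le_mul_of_one_le_left (Real.exp_pos _).le hR

theorem integral_Ioi_mul_exp_neg_sq (R : ℝ) :
    ∫ t in Set.Ioi R, t * Real.exp (-t ^ 2) = Real.exp (-R ^ 2) / 2 := by
  have hint : Integrable (fun t : ℝ => t * Real.exp (-t ^ 2)) := by
    simpa using integrable_mul_exp_neg_mul_sq (b := 1) one_pos
  have hderiv : ∀ x ∈ Set.Ici R,
      HasDerivAt (fun t : ℝ => -(Real.exp (-t ^ 2) / 2)) (x * Real.exp (-x ^ 2)) x := by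
    intro x _
    have h := (((hasDerivAt_pow 2 x).fun_neg.exp).div_const 2).fun_neg
    refine h.congr_deriv ?_
    push_cast
    ring
  have hlim : Tendsto (fun t : ℝ => -(Real.exp (-t ^ 2) / 2)) atTop (nhds 0) := by
    simpa using (tendsto_exp_neg_sq.div_const 2).neg
  rw [integral_Ioi_of_hasDerivAt_of_tendsto' hderiv hint.integrableOn hlim]
  ring

/-- The Gaussian tail bound. -/
theorem mul_integral_Ioi_le (R : ℝ) :
    R * ∫ t in Set.Ioi R, Real.exp (-t ^ 2) ≤ Real.exp (-R ^ 2) / 2 := by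
  rw [← integral_Ioi_mul_exp_neg_sq, ← integral_const_mul]
  refine setIntegral_mono_on (integrable_exp_neg_sq.const_mul R).integrableOn ?_
    measurableSet_Ioi ?_
  · have h : Integrable (fun t : ℝ => t * Real.exp (-t ^ 2)) := by
      simpa using integrable_mul_exp_neg_mul_sq (b := 1) one_pos
    exact h.integrableOn
  · intro t ht
    exact mul_le_mul_of_nonneg_right (le_of_lt ht) (Real.exp_pos _).le

theorem erfc_neg (R : ℝ) : erfc (-R) = 2 - erfc R := by
  have hfull : ∫ t : ℝ, Real.exp (-t ^ 2) = Real.sqrt Real.pi := by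
    simpa using integral_gaussian 1
  have hsplit := intervalIntegral.integral_Iic_add_Ioi (b := -R)
    integrable_exp_neg_sq.integrableOn integrable_exp_neg_sq.integrableOn
  have hrefl : ∫ t in Set.Iic (-R), Real.exp (-t ^ 2) = ∫ t in Set.Ioi R, Real.exp (-t ^ 2) := by
    rw [← integral_comp_neg_Ioi R (fun t : ℝ => Real.exp (-t ^ 2))]
    refine integral_congr_ae (ae_of_all _ fun t => ?_)
    show Real.exp (-(-t) ^ 2) = Real.exp (-t ^ 2)
    rw [neg_sq]
  rw [hrefl, hfull] at hsplit
  have hpi : Real.sqrt Real.pi ≠ 0 := (Real.sqrt_pos.mpr Real.pi_pos).ne'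
  unfold erfc
  rw [eq_sub_of_add_eq' hsplit]
  field_simp

theorem erfc_nonneg (R : ℝ) : 0 ≤ erfc R :=
  mul_nonneg (by positivity) (integral_nonneg fun _ => (Real.exp_pos _).le)

theorem tendsto_sq_mul_erfc : Tendsto (fun R : ℝ => R ^ 2 * erfc R) atTop (nhds 0) := by
  have h : Tendsto (fun R : ℝ => 1 / Real.sqrt Real.pi * (R * Real.exp (-R ^ 2)))
      atTop (nhds 0) := by
    simpa using tendsto_mul_exp_neg_sq.const_mul (1 / Real.sqrt Real.pi)
  refine squeeze_zero' (Eventually.of_forall fun R => mul_nonneg (sq_nonneg R) (erfc_nonneg R))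
    ?_ h
  filter_upwards [eventually_ge_atTop 0] with R hR
  calc R ^ 2 * erfc R
      = 2 / Real.sqrt Real.pi * (R * (R * ∫ t in Set.Ioi R, Real.exp (-t ^ 2))) := by
        unfold erfc
        ring
    _ ≤ 2 / Real.sqrt Real.pi * (R * (Real.exp (-R ^ 2) / 2)) := by
        gcongr
        exact mul_integral_Ioi_le R
    _ = 1 / Real.sqrt Real.pi * (R * Real.exp (-R ^ 2)) := by ring

theorem tendsto_erfc : Tendsto erfc atTop (nhds 0) := by
  refine squeeze_zero' (Eventually.of_forall erfc_nonneg) ?_ tendsto_sq_mul_erfc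
  filter_upwards [eventually_ge_atTop 1] with R hR
  exact le_mul_of_one_le_left (erfc_nonneg R) (one_le_pow₀ hR)

theorem tendsto_erfc_neg : Tendsto (fun R : ℝ => erfc (-R)) atTop (nhds 2) := by
  simpa [erfc_neg] using tendsto_erfc.const_sub 2

theorem tendsto_D : Tendsto D atTop (nhds 2) := by
  have hRg := tendsto_mul_exp_neg_sq.div_const (Real.sqrt Real.pi)
  have hg := tendsto_exp_neg_sq.div_const (Real.sqrt Real.pi)
  have h := (((tendsto_erfc_neg.add (tendsto_sq_mul_erfc.mul tendsto_erfc_neg)).add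
    (hRg.const_mul 2)).sub ((tendsto_erfc_neg.const_mul 2).mul hRg)).sub (hg.pow 2)
  norm_num at h
  refine h.congr fun R => ?_
  rw [D, erfc_neg]
  ring

theorem C_tendsto_atTop : Tendsto C atTop (nhds 1) := by
  have h := tendsto_erfc_neg.div tendsto_D two_ne_zero
  rwa [div_self two_ne_zero] at h
end

section
/- C(R) tends to +∞ as R tends to −∞. -/
/-!
Put `x = -R > 0` and let `Mₖ = (2/√π) ∫ₓ^∞ (t - x)ᵏ exp (-t²) dt`. Integration by parts expresses
these moments through `erfc x` and `exp (-x²)`, and gives `M₀ = erfc x`,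
`M₁ = exp (-x²)/√π - x erfc x`, hence `D R = 2 M₂ - M₁²`, together with the recursions
`M₀ = 2 M₂ + 2 x M₁` and `M₁ = M₃ + x M₂`.

* Upper bound: the recursions give `x M₂ ≤ M₁` and `2 x M₁ ≤ M₀`, so `x² D R ≤ 2 x² M₂ ≤ M₀`.
* Positivity: Cauchy-Schwarz gives `M₁² ≤ M₀ M₂`, and `M₁ ≥ 0` forces `M₀ < 2` for `x ≥ 1`, so
  `D R ≥ (2 - M₀) M₂ > 0`.

Therefore `C R = M₀ / D R ≥ R²` for `R ≤ -1`.
-/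

open MeasureTheory Filter

/-- The incomplete Gaussian moment `∫ₓ^∞ tᵏ exp (-t²) dt`. -/
noncomputable def gaussTail (k : ℕ) (x : ℝ) : ℝ :=
  ∫ t in Set.Ioi x, t ^ k * Real.exp (-t ^ 2)

lemma integrable_pow_mul_gauss (k : ℕ) :
    Integrable (fun t : ℝ => t ^ k * Real.exp (-t ^ 2)) := by
  have h := integrable_rpow_mul_exp_neg_mul_sq (b := 1) one_pos (s := (k : ℝ))
    (by have : (0 : ℝ) ≤ k := k.cast_nonneg
        linarith)
  simpa [Real.rpow_natCast] using h

lemma tendsto_pow_mul_gauss (k : ℕ) :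
    Tendsto (fun t : ℝ => t ^ k * Real.exp (-t ^ 2)) atTop (nhds 0) := by
  refine squeeze_zero' (g := fun t : ℝ => t ^ k * Real.exp (-t)) ?_ ?_
    (Real.tendsto_pow_mul_exp_neg_atTop_nhds_zero k)
  · filter_upwards [eventually_ge_atTop 1] with t ht
    positivity
  · filter_upwards [eventually_ge_atTop 1] with t ht
    gcongr
    nlinarith

lemma hasDerivAt_gauss (t : ℝ) :
    HasDerivAt (fun t : ℝ => Real.exp (-t ^ 2)) (-2 * (t ^ 1 * Real.exp (-t ^ 2))) t := by
  have h := ((hasDerivAt_pow 2 t).fun_neg).exp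
  convert h using 1
  push_cast
  ring

lemma gaussTail_one (x : ℝ) : 2 * gaussTail 1 x = Real.exp (-x ^ 2) := by
  have h := integral_Ioi_of_hasDerivAt_of_tendsto' (a := x) (m := 0)
    (fun t _ => hasDerivAt_gauss t)
    ((integrable_pow_mul_gauss 1).const_mul (-2)).integrableOn
    (by simpa only [pow_zero, one_mul] using tendsto_pow_mul_gauss 0)
  rw [integral_const_mul] at h
  unfold gaussTail
  linarith

/-- Integration by parts for the incomplete Gaussian moments. -/
lemma gaussTail_add_two (k : ℕ) (x : ℝ) :
    2 * gaussTail (k + 2) x = (k + 1) * gaussTail k x + x ^ (k + 1) * Real.exp (-x ^ 2) := by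
  have hi0 := ((integrable_pow_mul_gauss k).const_mul ((k : ℝ) + 1)).integrableOn (s := Set.Ioi x)
  have hi2 := ((integrable_pow_mul_gauss (k + 2)).const_mul 2).integrableOn (s := Set.Ioi x)
  have h := integral_Ioi_of_hasDerivAt_of_tendsto' (a := x) (m := 0)
    (f := fun t : ℝ => t ^ (k + 1) * Real.exp (-t ^ 2))
    (f' := fun t : ℝ => ((k : ℝ) + 1) * (t ^ k * Real.exp (-t ^ 2)) -
      2 * (t ^ (k + 2) * Real.exp (-t ^ 2)))
    (fun t _ => by
      refine ((hasDerivAt_pow (k + 1) t).fun_mul (hasDerivAt_gauss t)).congr_deriv ?_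
      push_cast
      ring)
    (hi0.sub hi2) (tendsto_pow_mul_gauss (k + 1))
  rw [integral_sub hi0 hi2, integral_const_mul, integral_const_mul] at h
  unfold gaussTail
  linarith

/-- Integration of a cubic polynomial against the Gaussian tail, in terms of `gaussTail`. -/
lemma integral_cubic (x a b c d : ℝ) :
    ∫ t in Set.Ioi x, (a + b * t + c * t ^ 2 + d * t ^ 3) * Real.exp (-t ^ 2) =
      a * gaussTail 0 x + b * gaussTail 1 x + c * gaussTail 2 x + d * gaussTail 3 x := by
  have hi (k : ℕ) (r : ℝ) :=
    ((integrable_pow_mul_gauss k).const_mul r).integrableOn (s := Set.Ioi x)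
  have e : (fun t : ℝ => (a + b * t + c * t ^ 2 + d * t ^ 3) * Real.exp (-t ^ 2)) =
      fun t => a * (t ^ 0 * Real.exp (-t ^ 2)) + b * (t ^ 1 * Real.exp (-t ^ 2)) +
        c * (t ^ 2 * Real.exp (-t ^ 2)) + d * (t ^ 3 * Real.exp (-t ^ 2)) := by
    funext t
    ring
  rw [e]
  have h3 := integral_add (((hi 0 a).add (hi 1 b)).add (hi 2 c)) (hi 3 d)
  have h2 := integral_add ((hi 0 a).add (hi 1 b)) (hi 2 c)
  have h1 := integral_add (hi 0 a) (hi 1 b)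
  simp only [Pi.add_apply] at h1 h2 h3
  rw [h3, h2, h1]
  simp only [integral_const_mul, gaussTail]

lemma cubic_nonneg (x a b c d : ℝ) (h : ∀ t, x < t → 0 ≤ a + b * t + c * t ^ 2 + d * t ^ 3) :
    0 ≤ a * gaussTail 0 x + b * gaussTail 1 x + c * gaussTail 2 x + d * gaussTail 3 x := by
  rw [← integral_cubic]
  exact setIntegral_nonneg measurableSet_Ioi
    fun t ht => mul_nonneg (h t ht) (Real.exp_pos _).le

lemma gaussTail_zero_pos (x : ℝ) : 0 < gaussTail 0 x := by
  unfold gaussTail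
  rw [setIntegral_pos_iff_support_of_nonneg_ae]
  · have : (Function.support fun t : ℝ => t ^ 0 * Real.exp (-t ^ 2)) = Set.univ := by
      ext t
      simp [Real.exp_ne_zero]
    rw [this]
    simp
  · exact Eventually.of_forall fun t => by simpa using (Real.exp_pos _).le
  · exact (integrable_pow_mul_gauss 0).integrableOn

/-- The algebraic core: with `m₀, m₁, m₂` the normalized centred moments of the Gaussian tail,
the denominator `2 m₂ - m₁²` is positive and at most `m₀ / x²`. -/
lemma sq_le_div_of_moments {x m₀ m₁ m₂ : ℝ} (hx : 1 ≤ x) (h0 : 0 < m₀) (h02 : m₀ < 2)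
    (h1 : 0 ≤ m₁) (h2 : 0 ≤ m₂) (hrec : m₀ = 2 * m₂ + 2 * x * m₁) (h21 : x * m₂ ≤ m₁)
    (hcs : m₁ ^ 2 ≤ m₀ * m₂) : x ^ 2 ≤ m₀ / (2 * m₂ - m₁ ^ 2) := by
  have h2' : 0 < m₂ := by
    rcases h2.lt_or_eq with h | h
    · exact h
    · -- if `m₂ = 0` then `m₁ = 0` by Cauchy-Schwarz, and the recursion kills `m₀`
      subst h
      have : m₁ = 0 := by nlinarith
      subst this
      linarith
  have hD : 0 < 2 * m₂ - m₁ ^ 2 := by nlinarith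
  rw [le_div_iff₀ hD]
  nlinarith [mul_le_mul_of_nonneg_left h21 (by linarith : 0 ≤ x), sq_nonneg (x * m₁)]

lemma sq_le_C {R : ℝ} (hR : R ≤ -1) : R ^ 2 ≤ C R := by
  obtain ⟨x, rfl⟩ : ∃ x, R = -x := ⟨-R, by ring⟩
  have hx : 1 ≤ x := by linarith
  have e1 := gaussTail_one x
  have e2 := gaussTail_add_two 0 x
  have e3 := gaussTail_add_two 1 x
  norm_num at e2 e3
  have p0 := gaussTail_zero_pos x
  have n1 := cubic_nonneg x (-x) 1 0 0 (fun t ht => by linarith)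
  have n2 := cubic_nonneg x (x ^ 2) (-2 * x) 1 0 (fun t ht => by nlinarith [sq_nonneg (t - x)])
  have n3 := cubic_nonneg x (-x ^ 3) (3 * x ^ 2) (-3 * x) 1
    (fun t ht => by
      have : 0 ≤ (t - x) ^ 3 := pow_nonneg (by linarith) 3
      linarith)
  -- Cauchy-Schwarz: integrate the square `(a (t - x) - b)²`, with `a, b` the zeroth and first
  -- centred moments
  have hcs : (gaussTail 1 x - x * gaussTail 0 x) ^ 2 ≤
      gaussTail 0 x * (gaussTail 2 x - 2 * x * gaussTail 1 x + x ^ 2 * gaussTail 0 x) := by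
    have key (a b : ℝ) := cubic_nonneg x ((a * x + b) ^ 2) (-2 * a * (a * x + b)) (a ^ 2) 0
      (fun t _ => by nlinarith [sq_nonneg (a * t - (a * x + b))])
    have := key (gaussTail 0 x) (gaussTail 1 x - x * gaussTail 0 x)
    refine le_of_mul_le_mul_left ?_ p0
    linarith
  have hexp : Real.exp (-x ^ 2) ≤ 1 := Real.exp_le_one_iff.2 (by nlinarith)
  have hpi : 1 < Real.sqrt Real.pi := by
    rw [Real.lt_sqrt zero_le_one]
    linarith [Real.pi_gt_three]
  obtain ⟨c, hc⟩ : ∃ c, c = 2 / Real.sqrt Real.pi := ⟨_, rfl⟩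
  have hc0 : 0 < c := by rw [hc]; positivity
  have hc2 : c < 2 := by
    rw [hc, div_lt_iff₀ (by linarith)]
    linarith
  have hE : erfc x = c * gaussTail 0 x := by simp [erfc, gaussTail, hc]
  have hg : Real.exp (-x ^ 2) / Real.sqrt Real.pi = c * gaussTail 1 x := by
    rw [hc, ← e1]
    ring
  have hD : D (-x) = 2 * (c * (gaussTail 2 x - 2 * x * gaussTail 1 x + x ^ 2 * gaussTail 0 x)) -
      (c * (gaussTail 1 x - x * gaussTail 0 x)) ^ 2 := by
    have h : 2 * -x * Real.exp (-x ^ 2) / Real.sqrt Real.pi = -2 * x * (c * gaussTail 1 x) := by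
      rw [← hg]
      ring
    unfold D
    rw [neg_neg, neg_sq, hE, h, hg]
    linear_combination c * e1 * x - c * e2
  unfold C
  rw [hD, neg_neg, neg_sq, hE]
  have hJ0 : gaussTail 0 x ≤ 1 := by nlinarith
  refine sq_le_div_of_moments hx (by positivity) (by nlinarith)
    (mul_nonneg hc0.le (by linarith)) (mul_nonneg hc0.le (by linarith)) ?_ ?_ ?_
  · linear_combination c * (x * e1 - e2)
  · have : x * (gaussTail 2 x - 2 * x * gaussTail 1 x + x ^ 2 * gaussTail 0 x) ≤
        gaussTail 1 x - x * gaussTail 0 x := by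
      rw [← e1] at e2 e3
      nlinarith
    linarith [mul_le_mul_of_nonneg_left this hc0.le]
  · linarith [mul_le_mul_of_nonneg_left hcs (sq_nonneg c)]

theorem C_tendsto_atBot : Tendsto C atBot atTop := by
  refine tendsto_atTop_mono' atBot (f₁ := fun R : ℝ => R ^ 2) ?_ ?_
  · filter_upwards [eventually_le_atBot (-1)] with R hR using sq_le_C hR
  · have h := (tendsto_pow_atTop (α := ℝ) two_ne_zero).comp tendsto_neg_atBot_atTop
    simpa [Function.comp_def] using h
end

section
/- Let b be a standard Gaussian random variable, and let t, w ∈ ℝ^d be fixed vectors. Set P = Σ_{i=1}^d w_i·max(t_i, 0) and N = Σ_{i=1}^d w_i·max(−t_i, 0). Then Var_b( Σ_{i=1}^d w_i·max(b·t_i, 0) ) = (P² + N²)/2 − (P + N)²/(2π). -/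
/-!
With `p = ∑ wᵢ tᵢ⁺` and `n = ∑ wᵢ tᵢ⁻`, the random sum is
`(p - n) / 2 * b + (p + n) / 2 * |b|`. Under the standard Gaussian, `b` and `b * |b|` are odd and
have mean zero, `b ^ 2` has mean `1`, and `|b|` has mean `√(2 / π)`
(`integral_abs_stdGaussian`). Hence the second moment is `((p - n) ^ 2 + (p + n) ^ 2) / 4` and the
mean is `(p + n) / 2 * √(2 / π)`.
-/

open MeasureTheory ProbabilityTheory

lemma sum_relu_eq (d : ℕ) (t w : Fin d → ℝ) (x : ℝ) :
    ∑ i, w i * max (x * t i) 0 =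
      ((∑ i, w i * max (t i) 0) - (∑ i, w i * max (-t i) 0)) / 2 * x +
        ((∑ i, w i * max (t i) 0) + (∑ i, w i * max (-t i) 0)) / 2 * |x| := by
  rw [← Finset.sum_sub_distrib, ← Finset.sum_add_distrib, Finset.sum_div, Finset.sum_div,
    Finset.sum_mul, Finset.sum_mul, ← Finset.sum_add_distrib]
  refine Finset.sum_congr rfl fun i _ => ?_
  have relu (y : ℝ) : max y 0 = (y + |y|) / 2 := by
    rcases le_total 0 y with h | h
    · rw [max_eq_left h, abs_of_nonneg h]; ring
    · rw [max_eq_right h, abs_of_nonpos h]; ring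
  rw [relu, relu, relu, abs_neg, abs_mul]
  ring

lemma integral_stdGaussian_of_odd (f : ℝ → ℝ) (hf : Measurable f) (hodd : ∀ x, f (-x) = -f x) :
    ∫ x, f x ∂gaussianReal 0 1 = 0 := by
  have h : ∫ x, f x ∂gaussianReal 0 1 = ∫ x, f (-x) ∂gaussianReal 0 1 := by
    conv_lhs => rw [← neg_zero, ← gaussianReal_map_neg]
    rw [integral_map (by fun_prop) hf.aestronglyMeasurable]
  simp only [hodd, integral_neg] at h
  linarith

lemma integral_sq_stdGaussian : ∫ x, x ^ 2 ∂gaussianReal 0 1 = 1 := by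
  have h := variance_id_gaussianReal (μ := 0) (v := 1)
  rw [variance_of_integral_eq_zero aemeasurable_id (by simp)] at h
  simpa using h

lemma integral_abs_stdGaussian : ∫ x, |x| ∂gaussianReal 0 1 = √(2 / Real.pi) := by
  rw [integral_gaussianReal_eq_integral_smul one_ne_zero]
  have h1 : ∀ x : ℝ, gaussianPDFReal 0 1 x • |x| =
      (fun y : ℝ => (√(2 * Real.pi))⁻¹ * (y ^ (1 : ℝ) * Real.exp (-(1 / 2) * y ^ (2 : ℝ)))) |x| := by
    intro x
    simp only [gaussianPDFReal, Real.rpow_one, Real.rpow_two, sq_abs, smul_eq_mul]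
    simp only [NNReal.coe_one, mul_one, sub_zero]
    rw [show -x ^ 2 / 2 = -(1 / 2) * x ^ 2 by ring]
    ring
  simp_rw [h1]
  rw [integral_comp_abs (f := fun y : ℝ => (√(2 * Real.pi))⁻¹ *
      (y ^ (1 : ℝ) * Real.exp (-(1 / 2) * y ^ (2 : ℝ)))), integral_const_mul,
    integral_rpow_mul_exp_neg_mul_rpow (by norm_num) (by norm_num) (by norm_num)]
  norm_num [Real.rpow_neg_one]
  have hpi := Real.pi_pos
  have h2 : √2 * √2 = 2 := Real.mul_self_sqrt (by norm_num)
  have := Real.sqrt_pos.2 hpi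
  field_simp
  nlinarith

theorem relu_correlated_variance {Ω : Type*} [MeasurableSpace Ω] (P : Measure Ω)
    [IsProbabilityMeasure P] (b : Ω → ℝ) (hb : P.map b = gaussianReal 0 1)
    (d : ℕ) (t w : Fin d → ℝ) :
    variance (fun ω => ∑ i, w i * max (b ω * t i) 0) P =
      ((∑ i, w i * max (t i) 0) ^ 2 + (∑ i, w i * max (-t i) 0) ^ 2) / 2 -
        ((∑ i, w i * max (t i) 0) + (∑ i, w i * max (-t i) 0)) ^ 2 / (2 * Real.pi) := by
  -- The pushforward along a non-a.e.-measurable map is the zero measure, which is not Gaussian.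
  have hbm : AEMeasurable b P :=
    AEMeasurable.of_map_ne_zero (by rw [hb]; exact IsProbabilityMeasure.ne_zero _)
  simp_rw [sum_relu_eq d t w]
  generalize (∑ i, w i * max (t i) 0) = p
  generalize (∑ i, w i * max (-t i) 0) = n
  have hmap := variance_map (μ := P) (Y := b)
    (X := fun x : ℝ => (p - n) / 2 * x + (p + n) / 2 * |x|) (by fun_prop) hbm
  rw [hb] at hmap
  change Var[(fun x : ℝ => (p - n) / 2 * x + (p + n) / 2 * |x|) ∘ b; P] = _
  rw [← hmap]
  have hid : MemLp (fun x : ℝ => x) 2 (gaussianReal 0 1) := memLp_id_gaussianReal 2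
  have habs : MemLp (fun x : ℝ => |x|) 2 (gaussianReal 0 1) := hid.abs
  have hsq : Integrable (fun x : ℝ => x ^ 2) (gaussianReal 0 1) := hid.integrable_sq
  have hcross : Integrable (fun x : ℝ => x * |x|) (gaussianReal 0 1) := hid.integrable_mul habs
  have hexpand : ∀ x : ℝ, ((p - n) / 2 * x + (p + n) / 2 * |x|) ^ 2 =
      (p ^ 2 + n ^ 2) / 2 * x ^ 2 + (p ^ 2 - n ^ 2) / 2 * (x * |x|) := by
    intro x
    linear_combination ((p + n) / 2) ^ 2 * sq_abs x
  have hmem : MemLp (fun x : ℝ => (p - n) / 2 * x + (p + n) / 2 * |x|) 2 (gaussianReal 0 1) :=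
    (hid.const_mul _).add (habs.const_mul _)
  rw [variance_eq_sub hmem]
  simp only [Pi.pow_apply, hexpand]
  rw [integral_add (hsq.const_mul _) (hcross.const_mul _),
    integral_add ((hid.integrable (by norm_num)).const_mul _)
      ((habs.integrable (by norm_num)).const_mul _)]
  simp only [integral_const_mul]
  rw [integral_sq_stdGaussian, integral_abs_stdGaussian,
    integral_stdGaussian_of_odd (fun x => x * |x|) (by fun_prop) (by simp),
    integral_stdGaussian_of_odd (fun x => (p - n) / 2 * x) (by fun_prop) (by simp)]
  have hpi := Real.pi_pos
  rw [zero_add, mul_pow, Real.sq_sqrt (by positivity)]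
  field_simp
  ring
end
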